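/- In a monoidal category, if an update structure (Put, Get, m, Δ) satisfies PutPut and GetGet and is faithful (in the sense that the property can be exactly recovered: there is a state/effect pair witnessing that (effect on S ⊗ id_p) ∘ Get ∘ Put ∘ (state of S ⊗ id_p) = id_p), then the magma m is associative and the comagma Δ is coassociative. -/

import Mathlib

open CategoryTheory MonoidalCategory

/-!
Acting on a fixed state `ψ` of `S` gives a map `p ⟶ S`, and PutPut says that this map intertwines
`m` with the action of `p` on `S`. The action is associative with respect to `m`, so `m` is
associative as soon as the map is a monomorphism. The statement about `Δ` is the same one in the
opposite category. Faithfulness says that the map attached to `ψ`, followed by the dual map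
`S ⟶ p` attached to `φ`, is the identity: the first is a split monomorphism and the second a split
epimorphism.
-/

section

variable {C : Type*} [Category C] [MonoidalCategory C] {S p : C}

/-- The orbit map of a state `ψ` of `S` under `put`, which sends a property `x` to the state
obtained by putting `x` into `ψ`. -/
def orbitMap (put : S ⊗ p ⟶ S) (ψ : 𝟙_ C ⟶ S) : p ⟶ S :=
  (λ_ p).inv ≫ (ψ ▷ p) ≫ put

/-- The readout map of an effect `φ` on `S`, which gets the property and discards the remaining
state through `φ`. It is dual to `orbitMap`. -/
def readoutMap (get : S ⟶ S ⊗ p) (φ : S ⟶ 𝟙_ C) : S ⟶ p :=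
  get ≫ (φ ▷ p) ≫ (λ_ p).hom

lemma putput_op_of_getget {get : S ⟶ S ⊗ p} {Δ : p ⟶ p ⊗ p}
    (getget : get ≫ (get ▷ p) = get ≫ (S ◁ Δ) ≫ (α_ S p p).inv) :
    (get.op ▷ .op p) ≫ get.op =
      (α_ (.op S) (.op p) (.op p)).hom ≫ (.op S ◁ Δ.op) ≫ get.op := by
  simpa using congrArg Quiver.Hom.op getget

lemma mul_comp_orbitMap {put : S ⊗ p ⟶ S} {m : p ⊗ p ⟶ p}
    (putput : (put ▷ p) ≫ put = (α_ S p p).hom ≫ (S ◁ m) ≫ put) (ψ : 𝟙_ C ⟶ S) :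
    m ≫ orbitMap put ψ = (orbitMap put ψ ▷ p) ≫ put := by
  calc m ≫ (λ_ p).inv ≫ (ψ ▷ p) ≫ put
      = (λ_ (p ⊗ p)).inv ≫ (ψ ▷ (p ⊗ p)) ≫ (S ◁ m) ≫ put := by
        rw [leftUnitor_inv_naturality_assoc, whisker_exchange_assoc]
    _ = ((λ_ p).inv ▷ p) ≫ (ψ ▷ p ▷ p) ≫ (α_ S p p).hom ≫ (S ◁ m) ≫ put := by simp
    _ = (((λ_ p).inv ≫ (ψ ▷ p) ≫ put) ▷ p) ≫ put := by
        simp only [← putput, comp_whiskerRight, Category.assoc]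

lemma readoutMap_comp_comul {get : S ⟶ S ⊗ p} {Δ : p ⟶ p ⊗ p}
    (getget : get ≫ (get ▷ p) = get ≫ (S ◁ Δ) ≫ (α_ S p p).inv) (φ : S ⟶ 𝟙_ C) :
    readoutMap get φ ≫ Δ = get ≫ (readoutMap get φ ▷ p) := by
  simpa [orbitMap, readoutMap] using
    congrArg Quiver.Hom.unop (mul_comp_orbitMap (putput_op_of_getget getget) φ.op)

lemma mul_assoc_of_mono {put : S ⊗ p ⟶ S} {m : p ⊗ p ⟶ p}
    (putput : (put ▷ p) ≫ put = (α_ S p p).hom ≫ (S ◁ m) ≫ put)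
    (i : p ⟶ S) [Mono i] (hi : m ≫ i = (i ▷ p) ≫ put) :
    (m ▷ p) ≫ m = (α_ p p p).hom ≫ (p ◁ m) ≫ m := by
  rw [← cancel_mono i]
  calc ((m ▷ p) ≫ m) ≫ i
      = (i ▷ p ▷ p) ≫ (put ▷ p) ≫ put := by
        rw [Category.assoc, hi, ← comp_whiskerRight_assoc, hi, comp_whiskerRight_assoc]
    _ = (i ▷ p ▷ p) ≫ (α_ S p p).hom ≫ (S ◁ m) ≫ put := by rw [putput]
    _ = (α_ p p p).hom ≫ (p ◁ m) ≫ (i ▷ p) ≫ put := by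
        rw [associator_naturality_left_assoc, whisker_exchange_assoc]
    _ = ((α_ p p p).hom ≫ (p ◁ m) ≫ m) ≫ i := by simp only [Category.assoc, hi]

lemma comul_coassoc_of_epi {get : S ⟶ S ⊗ p} {Δ : p ⟶ p ⊗ p}
    (getget : get ≫ (get ▷ p) = get ≫ (S ◁ Δ) ≫ (α_ S p p).inv)
    (q : S ⟶ p) [Epi q] (hq : q ≫ Δ = get ≫ (q ▷ p)) :
    Δ ≫ (Δ ▷ p) = Δ ≫ (p ◁ Δ) ≫ (α_ p p p).inv := by
  have hq_op : Δ.op ≫ q.op = (q.op ▷ .op p) ≫ get.op := congrArg Quiver.Hom.op hq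
  simpa using congrArg Quiver.Hom.unop
    (mul_assoc_of_mono (putput_op_of_getget getget) q.op hq_op)

theorem faithful_assoc_coassoc_general {put : S ⊗ p ⟶ S} {get : S ⟶ S ⊗ p}
    {m : p ⊗ p ⟶ p} {Δ : p ⟶ p ⊗ p}
    (putput : (put ▷ p) ≫ put = (α_ S p p).hom ≫ (S ◁ m) ≫ put)
    (getget : get ≫ (get ▷ p) = get ≫ (S ◁ Δ) ≫ (α_ S p p).inv)
    (ψ : 𝟙_ C ⟶ S) [Mono (orbitMap put ψ)] (φ : S ⟶ 𝟙_ C) [Epi (readoutMap get φ)] :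
    ((m ▷ p) ≫ m = (α_ p p p).hom ≫ (p ◁ m) ≫ m) ∧
    (Δ ≫ (Δ ▷ p) = Δ ≫ (p ◁ Δ) ≫ (α_ p p p).inv) :=
  ⟨mul_assoc_of_mono putput (orbitMap put ψ) (mul_comp_orbitMap putput ψ),
    comul_coassoc_of_epi getget (readoutMap get φ) (readoutMap_comp_comul getget φ)⟩

end

/-- If an update structure satisfying PutPut and GetGet is faithful, then its magma
is associative and its comagma is coassociative. -/
theorem faithful_assoc_coassoc {C : Type*} [Category C] [MonoidalCategory C] {S p : C}
    (put : S ⊗ p ⟶ S) (get : S ⟶ S ⊗ p) (m : p ⊗ p ⟶ p) (Δ : p ⟶ p ⊗ p)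
    (putput : (put ▷ p) ≫ put = (α_ S p p).hom ≫ (S ◁ m) ≫ put)
    (getget : get ≫ (get ▷ p) = get ≫ (S ◁ Δ) ≫ (α_ S p p).inv)
    -- faithfulness: a state/effect pair on S witnessing exact recovery of the property
    (faithful : ∃ (ψ : 𝟙_ C ⟶ S) (φ : S ⟶ 𝟙_ C),
      (λ_ p).inv ≫ (ψ ▷ p) ≫ put ≫ get ≫ (φ ▷ p) ≫ (λ_ p).hom = 𝟙 p) :
    -- the magma is associative
    ((m ▷ p) ≫ m = (α_ p p p).hom ≫ (p ◁ m) ≫ m) ∧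
    -- the comagma is coassociative
    (Δ ≫ (Δ ▷ p) = Δ ≫ (p ◁ Δ) ≫ (α_ p p p).inv) := by
  obtain ⟨ψ, φ, h⟩ := faithful
  have recovery : orbitMap put ψ ≫ readoutMap get φ = 𝟙 p := by
    simpa [orbitMap, readoutMap] using h
  have : Mono (orbitMap put ψ) := (SplitMono.mk _ recovery).mono
  have : Epi (readoutMap get φ) := (SplitEpi.mk _ recovery).epi
  exact faithful_assoc_coassoc_general putput getget ψ φ
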